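/- arXiv:1710.01108 — 2 statements merged into one kernel-verified Lean document; each statement's English description precedes it below -/
import Mathlib

section
/- Let x₀ be an interior point of I and let f, g, h : I → ℝ be continuous and strictly monotone. Suppose f and g are differentiable at x₀ with f'(x₀) ≠ 0 and g'(x₀) ≠ 0, and that A^[f] ≤ A^[h] ≤ A^[g]. Then h is differentiable at x₀ and h'(x₀) ≠ 0. -/
/-!
Negating a generator does not change its mean, so all three generators may be taken increasing.
The mean of two points already gives that `A^[f] ≤ A^[h]` forces `h ∘ f⁻¹` to be midpoint convex,
hence convex by continuity (`chord_of_midLE`; everything is phrased on `I`, without inverses).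
Thus `t ↦ (h t - h x₀) / (f t - f x₀)` is increasing and positive, so it has one-sided limits at
`x₀`, both positive, the left one at most the right one; multiplying by the slope of `f` gives
one-sided derivatives `l ≤ r` of `h`. In the same way `(g t - g x₀) / (h t - h x₀)` is increasing,
which gives `g' / l ≤ g' / r`, that is `r ≤ l`. Hence `l = r > 0`.
-/

open Set Function Filter

/-- The quasi-arithmetic mean generated by `f` on the interval `I`,
applied to a vector `a ∈ Iⁿ`: `f⁻¹((f a₁ + ⋯ + f aₙ)/n)`, where the
inverse of `f` is taken on `I`. -/
noncomputable def qam (I : Set ℝ) (f : ℝ → ℝ) {n : ℕ} (a : Fin n → ℝ) : ℝ :=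
  Function.invFunOn f I ((∑ i, f (a i)) / n)

/-- The natural (pointwise) partial order on quasi-arithmetic means:
`A^[f] ≤ A^[g]` iff `A^[f](a) ≤ A^[g](a)` for every `n ≥ 1` and every `a ∈ Iⁿ`. -/
def qamLE (I : Set ℝ) (f g : ℝ → ℝ) : Prop :=
  ∀ n : ℕ, 1 ≤ n → ∀ a : Fin n → ℝ, (∀ i, a i ∈ I) → qam I f a ≤ qam I g a

/-- `A^[f] = A^[g]` : equality of the two quasi-arithmetic means as means. -/
def qamEQ (I : Set ℝ) (f g : ℝ → ℝ) : Prop :=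
  ∀ n : ℕ, 1 ≤ n → ∀ a : Fin n → ℝ, (∀ i, a i ∈ I) → qam I f a = qam I g a

/-- `f` is strictly monotone on `I` (strictly increasing or strictly decreasing). -/
def StrictMonoOrAntiOn (f : ℝ → ℝ) (I : Set ℝ) : Prop :=
  StrictMonoOn f I ∨ StrictAntiOn f I

open scoped Topology

/-- The comparison of the means of two points, stated through witnesses: `m` and `m'` are the
`f`-mean and the `h`-mean of `x` and `y`. This form is visibly invariant under `f ↦ -f` and
`h ↦ -h`. -/
def MidLE (I : Set ℝ) (f h : ℝ → ℝ) : Prop :=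
  ∀ x ∈ I, ∀ y ∈ I, ∃ m ∈ I, ∃ m' ∈ I,
    2 * f m = f x + f y ∧ 2 * h m' = h x + h y ∧ m ≤ m'

theorem MidLE.neg_left {I : Set ℝ} {f h : ℝ → ℝ} (H : MidLE I f h) : MidLE I (-f) h := by
  intro x hx y hy
  obtain ⟨m, hm, m', hm', h1, h2, h3⟩ := H x hx y hy
  exact ⟨m, hm, m', hm', by simp only [Pi.neg_apply]; linarith, h2, h3⟩

theorem MidLE.neg_right {I : Set ℝ} {f h : ℝ → ℝ} (H : MidLE I f h) : MidLE I f (-h) := by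
  intro x hx y hy
  obtain ⟨m, hm, m', hm', h1, h2, h3⟩ := H x hx y hy
  exact ⟨m, hm, m', hm', h1, by simp only [Pi.neg_apply]; linarith, h3⟩

theorem qam_pair_spec {I : Set ℝ} (hI : I.OrdConnected) {f : ℝ → ℝ} (hfc : ContinuousOn f I)
    {x y : ℝ} (hx : x ∈ I) (hy : y ∈ I) :
    qam I f ![x, y] ∈ I ∧ 2 * f (qam I f ![x, y]) = f x + f y := by
  have hmem : (∑ i, f (![x, y] i)) / ((2 : ℕ) : ℝ) ∈ f '' I := by
    have hc : (f '' I).OrdConnected :=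
      (hI.isPreconnected.image f hfc).ordConnected
    have e : (∑ i, f (![x, y] i)) / ((2 : ℕ) : ℝ) = (f x + f y) / 2 := by
      simp [Fin.sum_univ_two]
    rw [e]
    apply hc.uIcc_subset (mem_image_of_mem f hx) (mem_image_of_mem f hy)
    rw [mem_uIcc]
    rcases le_total (f x) (f y) with h | h
    · left; constructor <;> linarith
    · right; constructor <;> linarith
  refine ⟨Function.invFunOn_mem hmem, ?_⟩
  have h2 := Function.invFunOn_eq hmem
  unfold qam
  rw [h2]
  simp only [Fin.sum_univ_two, Matrix.cons_val_zero, Matrix.cons_val_one, Nat.cast_ofNat]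
  ring

theorem midLE_of_qamLE {I : Set ℝ} (hI : I.OrdConnected) {f h : ℝ → ℝ}
    (hfc : ContinuousOn f I) (hhc : ContinuousOn h I) (H : qamLE I f h) : MidLE I f h := by
  intro x hx y hy
  obtain ⟨a1, a2⟩ := qam_pair_spec hI hfc hx hy
  obtain ⟨b1, b2⟩ := qam_pair_spec hI hhc hx hy
  refine ⟨_, a1, _, b1, a2, b2, H 2 (by norm_num) _ ?_⟩
  intro i
  fin_cases i <;> simpa

/-- Convexity of `h ∘ f⁻¹` in three-point form. If the difference `d` of `h` and its chord over `f`
had a positive maximum at some `w`, reflecting the nearer endpoint (in the `f`-scale) through `w`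
would bound that maximum by half of itself, since `d` vanishes at the endpoints. -/
theorem chord_of_midLE {I : Set ℝ} (hI : I.OrdConnected) {f h : ℝ → ℝ}
    (hfc : ContinuousOn f I) (hhc : ContinuousOn h I)
    (hf : StrictMonoOn f I) (hh : StrictMonoOn h I) (H : MidLE I f h)
    {x z y : ℝ} (hx : x ∈ I) (hy : y ∈ I) (hxz : x < z) (hzy : z < y) :
    (h z - h x) * (f y - f x) ≤ (h y - h x) * (f z - f x) := by
  have hsub : Icc x y ⊆ I := hI.out hx hy
  have hxy : x ≤ y := (hxz.trans hzy).le
  have hfpos : 0 < f y - f x := sub_pos.2 (hf hx hy (hxz.trans hzy))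
  set d : ℝ → ℝ := fun t => (h t - h x) * (f y - f x) - (h y - h x) * (f t - f x) with hd
  have hdc : ContinuousOn d (Icc x y) :=
    (((hhc.mono hsub).sub continuousOn_const).mul continuousOn_const).sub
      (continuousOn_const.mul ((hfc.mono hsub).sub continuousOn_const))
  obtain ⟨w, hw, hmax⟩ := isCompact_Icc.exists_isMaxOn (nonempty_Icc.2 hxy) hdc
  have hmax' : ∀ t ∈ Icc x y, d t ≤ d w := fun t ht => hmax ht
  suffices hle : d w ≤ 0 by
    have := hmax' z ⟨hxz.le, hzy.le⟩
    simp only [hd] at this hle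
    linarith
  have dx : d x = 0 := by simp [hd]
  have dy : d y = 0 := by simp only [hd]; ring
  have mid : ∀ p ∈ Icc x y, ∀ q ∈ Icc x y, 2 * f w = f p + f q → 2 * d w ≤ d p + d q := by
    intro p hp q hq e
    obtain ⟨m, hm, m', hm', h1, h2, h3⟩ := H p (hsub hp) q (hsub hq)
    have hmw : m = w := hf.injOn hm (hsub hw) (by linarith)
    subst hmw
    have h4 : 2 * h m ≤ h p + h q := by
      have := hh.monotoneOn hm hm' h3
      linarith
    have h5 := mul_le_mul_of_nonneg_right h4 hfpos.le
    have h6 : (h y - h x) * (2 * f m) = (h y - h x) * (f p + f q) := by rw [e]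
    simp only [hd]
    linarith
  have hxI : x ∈ Icc x y := ⟨le_rfl, hxy⟩
  have hyI : y ∈ Icc x y := ⟨hxy, le_rfl⟩
  have hfw1 : f x ≤ f w := hf.monotoneOn hx (hsub hw) hw.1
  have hfw2 : f w ≤ f y := hf.monotoneOn (hsub hw) hy hw.2
  rcases le_total (f w - f x) (f y - f w) with hc | hc
  · obtain ⟨q, hq, e⟩ := intermediate_value_Icc hxy (hfc.mono hsub)
      (show 2 * f w - f x ∈ Icc (f x) (f y) from ⟨by linarith, by linarith⟩)
    have := mid x hxI q hq (by linarith)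
    have := hmax' q hq
    linarith
  · obtain ⟨q, hq, e⟩ := intermediate_value_Icc hxy (hfc.mono hsub)
      (show 2 * f w - f y ∈ Icc (f x) (f y) from ⟨by linarith, by linarith⟩)
    have := mid q hq y hyI (by linarith)
    have := hmax' q hq
    linarith

theorem ratio_mono {I : Set ℝ} (hI : I.OrdConnected) {f h : ℝ → ℝ}
    (hfc : ContinuousOn f I) (hhc : ContinuousOn h I)
    (hf : StrictMonoOn f I) (hh : StrictMonoOn h I) (H : MidLE I f h)
    {x₀ : ℝ} (h0 : x₀ ∈ I) :
    MonotoneOn (fun t => (h t - h x₀) / (f t - f x₀)) (I \ {x₀}) := by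
  rintro s ⟨hs, hs0⟩ t ⟨ht, ht0⟩ hst
  simp only [mem_singleton_iff] at hs0 ht0
  rcases hst.eq_or_lt with rfl | hst
  · exact le_rfl
  have C := fun {x z y : ℝ} => @chord_of_midLE I hI f h hfc hhc hf hh H x z y
  change (h s - h x₀) / (f s - f x₀) ≤ (h t - h x₀) / (f t - f x₀)
  rcases lt_or_gt_of_ne hs0 with h1 | h1
  · have fs := hf hs h0 h1
    rw [← neg_div_neg_eq (h s - h x₀)]
    rcases lt_or_gt_of_ne ht0 with h2 | h2
    · have ft := hf ht h0 h2
      rw [← neg_div_neg_eq (h t - h x₀), div_le_div_iff₀ (by linarith) (by linarith)]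
      have := C hs h0 hst h2
      linarith
    · have ft := hf h0 ht h2
      rw [div_le_div_iff₀ (by linarith) (by linarith)]
      have := C hs ht h1 h2
      linarith
  · have fs := hf h0 hs h1
    have ft := hf h0 ht (h1.trans hst)
    rw [div_le_div_iff₀ (by linarith) (by linarith)]
    exact C h0 ht h1 hst

theorem ratio_pos {I : Set ℝ} {f h : ℝ → ℝ}
    (hf : StrictMonoOn f I) (hh : StrictMonoOn h I) {x₀ t : ℝ} (h0 : x₀ ∈ I)
    (ht : t ∈ I) (ht0 : t ≠ x₀) : 0 < (h t - h x₀) / (f t - f x₀) := by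
  rcases lt_or_gt_of_ne ht0 with h2 | h2
  · exact div_pos_of_neg_of_neg (sub_neg.2 (hh ht h0 h2)) (sub_neg.2 (hf ht h0 h2))
  · exact div_pos (sub_pos.2 (hh h0 ht h2)) (sub_pos.2 (hf h0 ht h2))

theorem deriv_pos_of_strictMonoOn {I : Set ℝ} {f : ℝ → ℝ} (hf : StrictMonoOn f I) {x₀ df : ℝ}
    (hx₀ : I ∈ 𝓝 x₀) (hdf : df ≠ 0) (hfd : HasDerivAt f df x₀) : 0 < df := by
  refine lt_of_le_of_ne ?_ hdf.symm
  have h1 := (hasDerivAt_iff_tendsto_slope.1 hfd)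
  refine ge_of_tendsto h1 ?_
  filter_upwards [mem_nhdsWithin_of_mem_nhds hx₀, self_mem_nhdsWithin] with t ht ht0
  rw [slope_def_field]
  exact (ratio_pos strictMonoOn_id hf (mem_of_mem_nhds hx₀) ht ht0).le

/-- The case of three increasing generators. -/
theorem deriv_ne_zero_of_strictMono {I : Set ℝ} (hI : I.OrdConnected) {x₀ : ℝ} (hx₀ : I ∈ 𝓝 x₀)
    {f g h : ℝ → ℝ}
    (hfc : ContinuousOn f I) (hgc : ContinuousOn g I) (hhc : ContinuousOn h I)
    (hf : StrictMonoOn f I) (hg : StrictMonoOn g I) (hh : StrictMonoOn h I)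
    {df : ℝ} (hdf : df ≠ 0) (hfd : HasDerivAt f df x₀)
    {dg : ℝ} (hdg : dg ≠ 0) (hgd : HasDerivAt g dg x₀)
    (H₁ : MidLE I f h) (H₂ : MidLE I h g) :
    ∃ d : ℝ, d ≠ 0 ∧ HasDerivAt h d x₀ := by
  have h0 : x₀ ∈ I := mem_of_mem_nhds hx₀
  have hdf' := deriv_pos_of_strictMonoOn hf hx₀ hdf hfd
  have hdg' := deriv_pos_of_strictMonoOn hg hx₀ hdg hgd
  obtain ⟨a, b, ⟨ha, hb⟩, hab⟩ := mem_nhds_iff_exists_Ioo_subset.1 hx₀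
  obtain ⟨a', ha1, ha2⟩ := exists_between ha
  obtain ⟨b', hb1, hb2⟩ := exists_between hb
  have haI : a' ∈ I := hab ⟨ha1, ha2.trans hb⟩
  have hbI : b' ∈ I := hab ⟨ha.trans hb1, hb2⟩
  have hL : Ioo a' x₀ ⊆ I \ {x₀} := fun t ht => ⟨hI.out haI h0 ⟨ht.1.le, ht.2.le⟩, ht.2.ne⟩
  have hR : Ioo x₀ b' ⊆ I \ {x₀} := fun t ht => ⟨hI.out h0 hbI ⟨ht.1.le, ht.2.le⟩, ht.1.ne'⟩
  set R : ℝ → ℝ := fun t => (h t - h x₀) / (f t - f x₀) with hRdef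
  have hRm : MonotoneOn R (I \ {x₀}) := ratio_mono hI hfc hhc hf hh H₁ h0
  have haD : a' ∈ I \ {x₀} := ⟨haI, ha2.ne⟩
  have hbD : b' ∈ I \ {x₀} := ⟨hbI, hb1.ne'⟩
  have ev_L : ∀ᶠ t in 𝓝[<] x₀, t ∈ Ioo a' x₀ := Ioo_mem_nhdsLT ha2
  have ev_R : ∀ᶠ t in 𝓝[>] x₀, t ∈ Ioo x₀ b' := Ioo_mem_nhdsGT hb1
  have hRa : 0 < R a' := ratio_pos hf hh h0 haI ha2.ne
  obtain ⟨l, hl⟩ : ∃ l, Tendsto R (𝓝[<] x₀) (𝓝 l) :=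
    ⟨_, MonotoneOn.tendsto_nhdsWithin_Ioo_left (nonempty_Ioo.2 ha2) (hRm.mono hL)
      ⟨R b', by rintro _ ⟨t, ht, rfl⟩; exact hRm (hL ht) hbD (ht.2.trans hb1).le⟩⟩
  obtain ⟨r, hr⟩ : ∃ r, Tendsto R (𝓝[>] x₀) (𝓝 r) :=
    ⟨_, MonotoneOn.tendsto_nhdsWithin_Ioo_right (nonempty_Ioo.2 hb1) (hRm.mono hR)
      ⟨R a', by rintro _ ⟨t, ht, rfl⟩; exact hRm haD (hR ht) (ha2.trans ht.1).le⟩⟩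
  have hl0 : 0 < l := hRa.trans_le (ge_of_tendsto hl (by
    filter_upwards [ev_L] with t ht using hRm haD (hL ht) ht.1.le))
  have cross : ∀ {Q : ℝ → ℝ} {u v : ℝ}, MonotoneOn Q (I \ {x₀}) →
      Tendsto Q (𝓝[<] x₀) (𝓝 u) → Tendsto Q (𝓝[>] x₀) (𝓝 v) → u ≤ v := by
    intro Q u v hQ hu hv
    refine le_of_tendsto hu ?_
    filter_upwards [ev_L] with s hs
    refine ge_of_tendsto hv ?_
    filter_upwards [ev_R] with t ht
    exact hQ (hL hs) (hR ht) (hs.2.trans ht.1).le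
  have hlr : l ≤ r := cross hRm hl hr
  obtain ⟨fl, fr⟩ := hasDerivAt_iff_tendsto_slope_left_right.1 hfd
  obtain ⟨gl, gr⟩ := hasDerivAt_iff_tendsto_slope_left_right.1 hgd
  have key : ∀ t ∈ I \ {x₀}, R t * slope f x₀ t = slope h x₀ t := by
    rintro t ⟨ht, ht0⟩
    have : f t - f x₀ ≠ 0 := fun e => ht0 (hf.injOn ht h0 (sub_eq_zero.1 e))
    rw [slope_def_field, slope_def_field, hRdef]
    exact div_mul_div_cancel₀ this
  have hhl : Tendsto (slope h x₀) (𝓝[<] x₀) (𝓝 (l * df)) :=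
    (hl.mul fl).congr' (by filter_upwards [ev_L] with t ht using key t (hL ht))
  have hhr : Tendsto (slope h x₀) (𝓝[>] x₀) (𝓝 (r * df)) :=
    (hr.mul fr).congr' (by filter_upwards [ev_R] with t ht using key t (hR ht))
  have hQ : MonotoneOn (fun t => slope g x₀ t / slope h x₀ t) (I \ {x₀}) := by
    refine (ratio_mono hI hhc hgc hh hg H₂ h0).congr ?_
    rintro t ⟨ht, ht0⟩
    have : t - x₀ ≠ 0 := sub_ne_zero.2 ht0
    simp only [slope_def_field]
    exact (div_div_div_cancel_right₀ this _ _).symm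
  have hld : 0 < l * df := mul_pos hl0 hdf'
  have hrd : 0 < r * df := mul_pos (hl0.trans_le hlr) hdf'
  have hle := cross hQ (gl.div hhl hld.ne') (gr.div hhr hrd.ne')
  rw [div_le_div_iff_of_pos_left hdg' hld hrd] at hle
  have heq : r * df = l * df :=
    le_antisymm hle (mul_le_mul_of_nonneg_right hlr hdf'.le)
  rw [heq] at hhr
  exact ⟨l * df, hld.ne', hasDerivAt_iff_tendsto_slope_left_right.2 ⟨hhl, hhr⟩⟩

/-- Theorem 3: if `f, g` are differentiable at an interior point `x₀`
with nonzero derivatives and `A^[f] ≤ A^[h] ≤ A^[g]`, then `h` is differentiable at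
`x₀` with nonzero derivative. -/
theorem deriv_nonzero_interval_type
    (I : Set ℝ) (hI : I.OrdConnected) (hInontriv : ∃ x ∈ I, ∃ y ∈ I, x < y)
    (x₀ : ℝ) (hx₀ : x₀ ∈ interior I)
    (f g h : ℝ → ℝ)
    (hfc : ContinuousOn f I) (hgc : ContinuousOn g I) (hhc : ContinuousOn h I)
    (hfm : StrictMonoOrAntiOn f I) (hgm : StrictMonoOrAntiOn g I)
    (hhm : StrictMonoOrAntiOn h I)
    (df : ℝ) (hdf : df ≠ 0) (hfd : HasDerivWithinAt f df I x₀)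
    (dg : ℝ) (hdg : dg ≠ 0) (hgd : HasDerivWithinAt g dg I x₀)
    (hle₁ : qamLE I f h) (hle₂ : qamLE I h g) :
    ∃ d : ℝ, d ≠ 0 ∧ HasDerivWithinAt h d I x₀ := by
  have hn : I ∈ 𝓝 x₀ := mem_interior_iff_mem_nhds.1 hx₀
  have H₁ := midLE_of_qamLE hI hfc hhc hle₁
  have H₂ := midLE_of_qamLE hI hhc hgc hle₂
  have hfd' := hfd.hasDerivAt hn
  have hgd' := hgd.hasDerivAt hn
  clear hle₁ hle₂ hfd hgd
  suffices hs : ∃ d : ℝ, d ≠ 0 ∧ HasDerivAt h d x₀ by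
    obtain ⟨d, h1, h2⟩ := hs
    exact ⟨d, h1, h2.hasDerivWithinAt⟩
  -- Each decreasing generator is replaced by its negative.
  wlog hf : StrictMonoOn f I generalizing f df
  · have hfa := hfm.resolve_left hf
    exact this (-f) hfc.neg (Or.inl hfa.neg) (-df) (neg_ne_zero.2 hdf) H₁.neg_left hfd'.neg hfa.neg
  wlog hg : StrictMonoOn g I generalizing g dg
  · have hga := hgm.resolve_left hg
    exact this (-g) hgc.neg (Or.inl hga.neg) (-dg) (neg_ne_zero.2 hdg) H₂.neg_right hgd'.neg hga.neg
  rcases hhm with hh | hh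
  · exact deriv_ne_zero_of_strictMono hI hn hfc hgc hhc hf hg hh hdf hfd' hdg hgd' H₁ H₂
  · obtain ⟨d, h1, h2⟩ := deriv_ne_zero_of_strictMono hI hn hfc hgc hhc.neg hf hg hh.neg hdf hfd' hdg
      hgd' H₁.neg_right H₂.neg_left
    exact ⟨-d, neg_ne_zero.2 h1, by simpa using h2.neg⟩
end

section
/- Let I ⊆ ℝ be an open nontrivial interval and let f, g, h : I → ℝ be continuous and strictly monotone. Suppose f and g are continuously differentiable on I with f'(x) ≠ 0 and g'(x) ≠ 0 for all x ∈ I, and that A^[f] ≤ A^[h] ≤ A^[g]. Then h is continuously differentiable on I and h'(x) ≠ 0 for all x ∈ I. -/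
/-!
All three generators may be taken increasing. Applied to pairs, `A^[f] ≤ A^[h]` says that
`φ = h ∘ f⁻¹` is midpoint-convex, hence, being continuous, convex; likewise `A^[h] ≤ A^[g]` makes
`h ∘ g⁻¹` concave (`convexOn_comp_inv`). A convex function has one-sided derivatives, the left one
at most the right one. As `f` and `g` are differentiable with positive derivative, this passes to
`h` (`exists_oneSided`): convexity gives `h'₋ ≤ h'₊` and concavity the reverse inequality, so `h`
is differentiable. Then `φ` is a differentiable convex function, whose derivative is monotone and
has the Darboux property, hence is continuous; it is positive because it dominates the slopes of
the strictly increasing `φ` to the left (`continuousOn_deriv_and_pos`). Finally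
`h' = (φ' ∘ f) * f'` by the chain rule.
-/

open Set Function Filter

open Topology in
/-- A monotone function on an open set whose image has no gaps has no jumps. -/
lemma continuousOn_of_monotoneOn_of_ordConnected_image {S : Set ℝ} {F : ℝ → ℝ}
    (hS : IsOpen S) (hF : MonotoneOn F S) (him : (F '' S).OrdConnected) : ContinuousOn F S := by
  intro a ha
  refine ContinuousAt.continuousWithinAt ?_
  obtain ⟨l, r, ⟨hla, har⟩, hlr⟩ := mem_nhds_iff_exists_Ioo_subset.1 (hS.mem_nhds ha)
  obtain ⟨c, hac, hcr⟩ := exists_between har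
  obtain ⟨d, hld, hda⟩ := exists_between hla
  have hc : c ∈ S := hlr ⟨hla.trans hac, hcr⟩
  have hd : d ∈ S := hlr ⟨hld, hda.trans har⟩
  refine tendsto_order.2 ⟨fun b hb => ?_, fun b hb => ?_⟩
  · obtain ⟨e, he, hea, hbe⟩ : ∃ e ∈ S, e < a ∧ b < F e := by
      rcases lt_or_ge b (F d) with h | h
      · exact ⟨d, hd, hda, h⟩
      · obtain ⟨b', hb1, hb2⟩ := exists_between hb
        obtain ⟨e, he, rfl⟩ := him.out (mem_image_of_mem F hd) (mem_image_of_mem F ha)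
          ⟨h.trans hb1.le, hb2.le⟩
        exact ⟨e, he, lt_of_not_ge fun hle => absurd (hF ha he hle) (not_le.2 hb2), hb1⟩
    filter_upwards [hS.mem_nhds ha, Ioi_mem_nhds hea] with y hy hey
    exact hbe.trans_le (hF he hy (le_of_lt hey))
  · obtain ⟨e, he, hea, hbe⟩ : ∃ e ∈ S, a < e ∧ F e < b := by
      rcases lt_or_ge (F c) b with h | h
      · exact ⟨c, hc, hac, h⟩
      · obtain ⟨b', hb1, hb2⟩ := exists_between hb
        obtain ⟨e, he, rfl⟩ := him.out (mem_image_of_mem F ha) (mem_image_of_mem F hc)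
          ⟨hb1.le, hb2.le.trans h⟩
        exact ⟨e, he, lt_of_not_ge fun hle => absurd (hF he ha hle) (not_le.2 hb1), hb2⟩
    filter_upwards [hS.mem_nhds ha, Iio_mem_nhds hea] with y hy hey
    exact (hF hy he (le_of_lt hey)).trans_lt hbe

/-- Maximum principle: a continuous midpoint-convex function on `[0, 1]` which vanishes at the
endpoints is nonpositive. -/
lemma nonpos_of_midpoint {k : ℝ → ℝ} (hk : ContinuousOn k (Icc 0 1)) (h0 : k 0 = 0) (h1 : k 1 = 0)
    (hmid : ∀ s ∈ Icc (0 : ℝ) 1, ∀ t ∈ Icc (0 : ℝ) 1, k ((s + t) / 2) ≤ (k s + k t) / 2)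
    {t : ℝ} (ht : t ∈ Icc (0 : ℝ) 1) : k t ≤ 0 := by
  by_contra! hpos
  obtain ⟨m, hm, hmax⟩ := isCompact_Icc.exists_isMaxOn ⟨t, ht⟩ hk
  have hM : 0 < k m := hpos.trans_le (hmax ht)
  -- At the leftmost maximizer `c`, every value to the left is strictly smaller than the maximum.
  have hcpt : IsCompact (Icc (0 : ℝ) 1 ∩ k ⁻¹' {k m}) :=
    isCompact_Icc.of_isClosed_subset
      (hk.preimage_isClosed_of_isClosed isClosed_Icc isClosed_singleton) inter_subset_left
  obtain ⟨c, ⟨hc, hcm⟩, hleast⟩ := hcpt.exists_isLeast ⟨m, hm, rfl⟩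
  have hcm : k c = k m := hcm
  have hc0 : 0 < c := lt_of_le_of_ne hc.1 (by rintro rfl; linarith)
  have hc1 : c < 1 := lt_of_le_of_ne hc.2 (by rintro rfl; linarith)
  have hd : 0 < min c (1 - c) := lt_min hc0 (by linarith)
  have hd1 := min_le_left c (1 - c)
  have hd2 := min_le_right c (1 - c)
  set d := min c (1 - c)
  have hl : c - d ∈ Icc (0 : ℝ) 1 := ⟨by linarith, by linarith⟩
  have hr : c + d ∈ Icc (0 : ℝ) 1 := ⟨by linarith, by linarith⟩
  have h2 := hmid _ hl _ hr
  rw [show (c - d + (c + d)) / 2 = c by ring] at h2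
  have h3 : k (c + d) ≤ k m := hmax hr
  have h4 : k (c - d) ≤ k m := hmax hl
  have h5 : k (c - d) ≠ k m := fun h => by
    have := hleast ⟨hl, h⟩
    linarith
  have := lt_of_le_of_ne h4 h5
  linarith

lemma convexOn_of_midpoint {S : Set ℝ} {φ : ℝ → ℝ} (hS : Convex ℝ S) (hφ : ContinuousOn φ S)
    (hmid : ∀ x ∈ S, ∀ y ∈ S, φ ((x + y) / 2) ≤ (φ x + φ y) / 2) : ConvexOn ℝ S φ := by
  refine ⟨hS, fun x hx y hy a b ha hb hab => ?_⟩
  have hmem : ∀ t ∈ Icc (0 : ℝ) 1, (1 - t) * x + t * y ∈ S := fun t ht =>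
    hS hx hy (by linarith [ht.2]) ht.1 (by ring)
  have := nonpos_of_midpoint
    (k := fun t => φ ((1 - t) * x + t * y) - ((1 - t) * φ x + t * φ y)) (t := b) ?_
    (by simp) (by simp) ?_ ⟨hb, by linarith⟩
  · obtain rfl : a = 1 - b := by linarith
    simp only [smul_eq_mul]
    linarith
  · refine ContinuousOn.sub (hφ.comp (by fun_prop) hmem) (by fun_prop)
  · intro s hs t ht
    have := hmid _ (hmem s hs) _ (hmem t ht)
    rw [show ((1 - s) * x + s * y + ((1 - t) * x + t * y)) / 2
      = (1 - (s + t) / 2) * x + (s + t) / 2 * y by ring] at this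
    linarith

lemma qam_two {I : Set ℝ} (hI : I.OrdConnected) {f : ℝ → ℝ} (hf : ContinuousOn f I) {x y : ℝ}
    (hx : x ∈ I) (hy : y ∈ I) :
    qam I f ![x, y] ∈ I ∧ f (qam I f ![x, y]) = (f x + f y) / 2 := by
  have hsub : uIcc x y ⊆ I := hI.uIcc_subset hx hy
  have hmem : (f x + f y) / 2 ∈ uIcc (f x) (f y) := by
    rcases le_total (f x) (f y) with h | h
    · rw [uIcc_of_le h]; constructor <;> linarith
    · rw [uIcc_of_ge h]; constructor <;> linarith
  obtain ⟨m, hm, hfm⟩ := intermediate_value_uIcc (hf.mono hsub) hmem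
  have := invFunOn_pos (f := f) (s := I) ⟨m, hsub hm, hfm⟩
  simpa [qam, Fin.sum_univ_two] using this

/-- A generator becomes increasing after scaling by a nonzero constant, which does not affect its
mean. -/
lemma exists_sign {I : Set ℝ} {f : ℝ → ℝ} (hf : StrictMonoOrAntiOn f I) :
    ∃ s : ℝ, s ≠ 0 ∧ StrictMonoOn (fun x => s * f x) I := by
  rcases hf with h | h
  · exact ⟨1, one_ne_zero, by simpa using h⟩
  · exact ⟨-1, by norm_num, fun x hx y hy hxy => by simpa using h hx hy hxy⟩

section Inverse

variable {I : Set ℝ} {u u' v : ℝ → ℝ}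

lemma invFunOn_apply (hum : StrictMonoOn u I) {x : ℝ} (hx : x ∈ I) :
    invFunOn u I (u x) = x :=
  hum.injOn.leftInvOn_invFunOn hx

lemma isOpen_image_gen (hI : I.OrdConnected) (hIo : IsOpen I) (hum : StrictMonoOn u I)
    (huc : ContinuousOn u I) : IsOpen (u '' I) := by
  rw [isOpen_iff_mem_nhds]
  rintro _ ⟨x, hx, rfl⟩
  obtain ⟨l, r, ⟨hl, hr⟩, hlr⟩ := mem_nhds_iff_exists_Ioo_subset.1 (hIo.mem_nhds hx)
  obtain ⟨c, hxc, hcr⟩ := exists_between hr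
  obtain ⟨d, hld, hdx⟩ := exists_between hl
  have hc : c ∈ I := hlr ⟨hl.trans hxc, hcr⟩
  have hd : d ∈ I := hlr ⟨hld, hdx.trans hr⟩
  refine mem_of_superset (Icc_mem_nhds (hum hd hx hdx) (hum hx hc hxc)) ?_
  exact (intermediate_value_Icc (hdx.trans hxc).le (huc.mono (hI.out hd hc))).trans
    (image_mono (hI.out hd hc))

lemma convex_image_gen (hI : I.OrdConnected) (huc : ContinuousOn u I) : Convex ℝ (u '' I) :=
  (hI.isPreconnected.image u huc).ordConnected.convex

lemma continuousAt_invFunOn (hI : I.OrdConnected) (hIo : IsOpen I) (hum : StrictMonoOn u I)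
    (huc : ContinuousOn u I) {x : ℝ} (hx : x ∈ I) : ContinuousAt (invFunOn u I) (u x) := by
  refine StrictMonoOn.continuousAt_of_image_mem_nhds (s := u '' I) ?_
    ((isOpen_image_gen hI hIo hum huc).mem_nhds (mem_image_of_mem u hx)) ?_
  · rintro _ ⟨a, ha, rfl⟩ _ ⟨b, hb, rfl⟩ hab
    rw [invFunOn_apply hum ha, invFunOn_apply hum hb]
    exact (hum.lt_iff_lt ha hb).1 hab
  · rw [invFunOn_apply hum hx, hum.injOn.invFunOn_image Subset.rfl]
    exact hIo.mem_nhds hx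

lemma hasDerivAt_invFunOn (hI : I.OrdConnected) (hIo : IsOpen I) (hum : StrictMonoOn u I)
    (hud : ∀ x ∈ I, HasDerivAt u (u' x) x) (hu0 : ∀ x ∈ I, 0 < u' x) {x : ℝ} (hx : x ∈ I) :
    HasDerivAt (invFunOn u I) (u' x)⁻¹ (u x) := by
  have huc : ContinuousOn u I := fun y hy => (hud y hy).continuousAt.continuousWithinAt
  refine HasDerivAt.of_local_left_inverse (f := u) (continuousAt_invFunOn hI hIo hum huc hx) ?_
    (hu0 x hx).ne' ?_
  · rw [invFunOn_apply hum hx]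
    exact hud x hx
  · filter_upwards [(isOpen_image_gen hI hIo hum huc).mem_nhds (mem_image_of_mem u hx)] with y hy
    exact invFunOn_eq hy

/-- If `v` is midpoint-convex in the coordinate `u`, then `v ∘ u⁻¹` is convex. -/
lemma convexOn_comp_inv (hI : I.OrdConnected) (hIo : IsOpen I) (hum : StrictMonoOn u I)
    (huc : ContinuousOn u I) (hvc : ContinuousOn v I)
    (hmid : ∀ x ∈ I, ∀ y ∈ I, ∀ m ∈ I, u m = (u x + u y) / 2 → v m ≤ (v x + v y) / 2) :
    ConvexOn ℝ (u '' I) (v ∘ invFunOn u I) := by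
  have hconv : Convex ℝ (u '' I) := convex_image_gen hI huc
  refine convexOn_of_midpoint hconv ?_ ?_
  · refine hvc.comp ?_ fun y hy => invFunOn_mem hy
    rintro _ ⟨x, hx, rfl⟩
    exact (continuousAt_invFunOn hI hIo hum huc hx).continuousWithinAt
  · rintro _ ⟨x, hx, rfl⟩ _ ⟨y, hy, rfl⟩
    have hm : (u x + u y) / 2 ∈ u '' I := by
      have := hconv (mem_image_of_mem u hx) (mem_image_of_mem u hy)
        (by norm_num : (0 : ℝ) ≤ 1 / 2) (by norm_num : (0 : ℝ) ≤ 1 / 2) (by norm_num)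
      simp only [smul_eq_mul] at this
      convert this using 1
      ring
    obtain ⟨m, hm, hum'⟩ := hm
    rw [← hum']
    simp only [comp_apply, invFunOn_apply hum hx, invFunOn_apply hum hy, invFunOn_apply hum hm]
    exact hmid x hx y hy m hm hum'

/-- If `v ∘ u⁻¹` is convex, then `v` has one-sided derivatives, the left one being at most the
right one. -/
lemma exists_oneSided (hI : I.OrdConnected) (hIo : IsOpen I) (hum : StrictMonoOn u I)
    (hud : ∀ x ∈ I, HasDerivAt u (u' x) x) (hu0 : ∀ x ∈ I, 0 < u' x)
    (hconv : ConvexOn ℝ (u '' I) (v ∘ invFunOn u I)) {x : ℝ} (hx : x ∈ I) :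
    ∃ l r, l ≤ r ∧ HasDerivWithinAt v l (Iio x) x ∧ HasDerivWithinAt v r (Ioi x) x := by
  have huc : ContinuousOn u I := fun y hy => (hud y hy).continuousAt.continuousWithinAt
  have hint : u x ∈ interior (u '' I) := by
    rw [(isOpen_image_gen hI hIo hum huc).interior_eq]
    exact mem_image_of_mem u hx
  have hL := hconv.hasDerivWithinAt_leftDeriv_of_mem_interior hint
  have hR := hconv.hasDerivWithinAt_rightDeriv_of_mem_interior hint
  have hLR := hconv.leftDeriv_le_rightDeriv_of_mem_interior hint
  have hcongr : ∀ y ∈ I, v y = ((v ∘ invFunOn u I) ∘ u) y := fun y hy => by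
    simp [invFunOn_apply hum hy]
  refine ⟨_, _, mul_le_mul_of_nonneg_right hLR (hu0 x hx).le, ?_, ?_⟩
  · refine (hasDerivWithinAt_inter (hIo.mem_nhds hx)).1 ?_
    refine HasDerivWithinAt.congr (hL.comp x (hud x hx).hasDerivWithinAt ?_)
      (fun y hy => hcongr y hy.2) (hcongr x hx)
    exact fun y hy => hum hy.2 hx hy.1
  · refine (hasDerivWithinAt_inter (hIo.mem_nhds hx)).1 ?_
    refine HasDerivWithinAt.congr (hR.comp x (hud x hx).hasDerivWithinAt ?_)
      (fun y hy => hcongr y hy.2) (hcongr x hx)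
    exact fun y hy => hum hx hy.2 hy.1

/-- If `v` is increasing and differentiable and `v ∘ u⁻¹` is convex, then the derivative of
`v ∘ u⁻¹` is monotone, hence continuous by Darboux's theorem, and it dominates the slopes of
chords to its left, hence is positive. -/
lemma continuousOn_deriv_and_pos {v' : ℝ → ℝ} (hI : I.OrdConnected) (hIo : IsOpen I)
    (hum : StrictMonoOn u I) (hud : ∀ x ∈ I, HasDerivAt u (u' x) x) (hu'c : ContinuousOn u' I)
    (hu0 : ∀ x ∈ I, 0 < u' x) (hvm : StrictMonoOn v I) (hvd : ∀ x ∈ I, HasDerivAt v (v' x) x)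
    (hconv : ConvexOn ℝ (u '' I) (v ∘ invFunOn u I)) :
    ContinuousOn v' I ∧ ∀ x ∈ I, 0 < v' x := by
  have huc : ContinuousOn u I := fun y hy => (hud y hy).continuousAt.continuousWithinAt
  have hJ : IsOpen (u '' I) := isOpen_image_gen hI hIo hum huc
  set φ := v ∘ invFunOn u I with hφ
  have hφd : ∀ x ∈ I, HasDerivAt φ (v' x * (u' x)⁻¹) (u x) := fun x hx => by
    have h1 := hvd x hx
    rw [← invFunOn_apply hum hx] at h1
    have h2 := h1.comp (u x) (hasDerivAt_invFunOn hI hIo hum hud hu0 hx)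
    rwa [invFunOn_apply hum hx] at h2
  have hφdiff : ∀ y ∈ u '' I, DifferentiableAt ℝ φ y := by
    rintro _ ⟨x, hx, rfl⟩
    exact (hφd x hx).differentiableAt
  have hcont : ContinuousOn (deriv φ) (u '' I) :=
    continuousOn_of_monotoneOn_of_ordConnected_image hJ (hconv.monotoneOn_deriv hφdiff)
      (hconv.1.ordConnected.image_deriv hφdiff)
  have heq : ∀ x ∈ I, v' x = deriv φ (u x) * u' x := fun x hx => by
    rw [(hφd x hx).deriv, inv_mul_cancel_right₀ (hu0 x hx).ne']
  refine ⟨ContinuousOn.congr ((hcont.comp huc (mapsTo_image u I)).mul hu'c) heq,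
    fun x hx => ?_⟩
  rw [heq x hx]
  refine mul_pos ?_ (hu0 x hx)
  obtain ⟨l, r, ⟨hl, hr⟩, hlr⟩ := mem_nhds_iff_exists_Ioo_subset.1 (hIo.mem_nhds hx)
  obtain ⟨d, hld, hdx⟩ := exists_between hl
  have hd : d ∈ I := hlr ⟨hld, hdx.trans hr⟩
  refine lt_of_lt_of_le ?_ (hconv.slope_le_deriv (mem_image_of_mem u hd) (mem_image_of_mem u hx)
    (hum hd hx hdx) (hφdiff _ (mem_image_of_mem u hx)))
  rw [slope_def_field, hφ]
  simp only [comp_apply, invFunOn_apply hum hx, invFunOn_apply hum hd]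
  exact div_pos (sub_pos.2 (hvm hd hx hdx)) (sub_pos.2 (hum hd hx hdx))

end Inverse

lemma pos_of_strictMonoOn {I : Set ℝ} (hIo : IsOpen I) {u : ℝ → ℝ} {c x : ℝ}
    (hum : StrictMonoOn u I) (hx : x ∈ I) (hud : HasDerivAt u c x) (hc : c ≠ 0) : 0 < c := by
  refine lt_of_le_of_ne ?_ hc.symm
  have h1 := hum.monotoneOn.derivWithin_nonneg (x := x)
  rwa [derivWithin_of_isOpen hIo hx, hud.deriv] at h1

/-- Proposition 1: on an open interval `I`, if `f, g` are `C¹` with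
nowhere vanishing derivatives and `A^[f] ≤ A^[h] ≤ A^[g]`, then `h` is `C¹` on `I`
with nowhere vanishing derivative. -/
theorem C1_nonvanishing_interval_type
    (I : Set ℝ) (hI : I.OrdConnected) (hIo : IsOpen I)
    (hInontriv : ∃ x ∈ I, ∃ y ∈ I, x < y)
    (f g h f' g' : ℝ → ℝ)
    (hfc : ContinuousOn f I) (hgc : ContinuousOn g I) (hhc : ContinuousOn h I)
    (hfm : StrictMonoOrAntiOn f I) (hgm : StrictMonoOrAntiOn g I)
    (hhm : StrictMonoOrAntiOn h I)
    (hfd : ∀ x ∈ I, HasDerivAt f (f' x) x) (hf'c : ContinuousOn f' I)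
    (hf'0 : ∀ x ∈ I, f' x ≠ 0)
    (hgd : ∀ x ∈ I, HasDerivAt g (g' x) x) (hg'c : ContinuousOn g' I)
    (hg'0 : ∀ x ∈ I, g' x ≠ 0)
    (hle₁ : qamLE I f h) (hle₂ : qamLE I h g) :
    ∃ h' : ℝ → ℝ, (∀ x ∈ I, HasDerivAt h (h' x) x) ∧ ContinuousOn h' I ∧
      ∀ x ∈ I, h' x ≠ 0 := by
  obtain ⟨sf, hsf, hum⟩ := exists_sign hfm
  obtain ⟨sg, hsg, hwm⟩ := exists_sign hgm
  obtain ⟨sh, hsh, hvm⟩ := exists_sign hhm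
  have hud : ∀ x ∈ I, HasDerivAt (fun x => sf * f x) (sf * f' x) x := fun x hx =>
    (hfd x hx).const_mul sf
  have hwd : ∀ x ∈ I, HasDerivAt (fun x => sg * g x) (sg * g' x) x := fun x hx =>
    (hgd x hx).const_mul sg
  have hu0 : ∀ x ∈ I, 0 < sf * f' x := fun x hx =>
    pos_of_strictMonoOn hIo hum hx (hud x hx) (mul_ne_zero hsf (hf'0 x hx))
  have hw0 : ∀ x ∈ I, 0 < sg * g' x := fun x hx =>
    pos_of_strictMonoOn hIo hwm hx (hwd x hx) (mul_ne_zero hsg (hg'0 x hx))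
  have hvc : ContinuousOn (fun x => sh * h x) I := continuousOn_const.mul hhc
  have hpair : ∀ x ∈ I, ∀ y ∈ I, ∀ i, (![x, y] : Fin 2 → ℝ) i ∈ I := fun x hx y hy i => by
    fin_cases i <;> simpa
  -- `A^[f] ≤ A^[h]` on pairs: `h` is midpoint-convex in the coordinate `f`.
  have hcf : ConvexOn ℝ ((fun x => sf * f x) '' I)
      ((fun x => sh * h x) ∘ invFunOn (fun x => sf * f x) I) := by
    refine convexOn_comp_inv hI hIo hum (continuousOn_const.mul hfc) hvc ?_
    intro x hx y hy m hm hmid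
    obtain ⟨h1, h2⟩ := qam_two hI hfc hx hy
    obtain ⟨h3, h4⟩ := qam_two hI hhc hx hy
    have h5 : m = qam I f ![x, y] := hum.injOn hm h1 (by
      rw [hmid, h2]
      ring)
    have h6 := hvm.monotoneOn hm h3 (h5.trans_le (hle₁ 2 (by norm_num) _ (hpair x hx y hy)))
    simp only [h4] at h6 ⊢
    linarith
  -- `A^[h] ≤ A^[g]` on pairs: `h` is midpoint-concave in the coordinate `g`.
  have hcg : ConvexOn ℝ ((fun x => sg * g x) '' I)
      ((fun x => -(sh * h x)) ∘ invFunOn (fun x => sg * g x) I) := by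
    refine convexOn_comp_inv hI hIo hwm (continuousOn_const.mul hgc) hvc.neg ?_
    intro x hx y hy m hm hmid
    obtain ⟨h1, h2⟩ := qam_two hI hgc hx hy
    obtain ⟨h3, h4⟩ := qam_two hI hhc hx hy
    have h5 : m = qam I g ![x, y] := hwm.injOn hm h1 (by
      rw [hmid, h2]
      ring)
    have h6 := hvm.monotoneOn h3 hm
      ((hle₂ 2 (by norm_num) _ (hpair x hx y hy)).trans_eq h5.symm)
    simp only [h4] at h6 ⊢
    linarith
  have hdiff : ∀ x ∈ I, ∃ d, HasDerivAt (fun x => sh * h x) d x := by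
    intro x hx
    obtain ⟨l, r, hlr, hl, hr⟩ := exists_oneSided hI hIo hum hud hu0 hcf hx
    obtain ⟨l', r', hlr', hl', hr'⟩ := exists_oneSided hI hIo hwm hwd hw0 hcg hx
    have e1 : l' = -l := (uniqueDiffWithinAt_Iio x).eq_deriv _ hl' hl.neg
    have e2 : r' = -r := (uniqueDiffWithinAt_Ioi x).eq_deriv _ hr' hr.neg
    obtain rfl : l = r := by linarith
    refine ⟨l, ?_⟩
    have h1 := (hasDerivWithinAt_Iio_iff_Iic.1 hl).union (hasDerivWithinAt_Ioi_iff_Ici.1 hr)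
    rwa [Iic_union_Ici, hasDerivWithinAt_univ] at h1
  choose! v' hv' using hdiff
  obtain ⟨hv'c, hv'0⟩ := continuousOn_deriv_and_pos hI hIo hum hud
    (continuousOn_const.mul hf'c) hu0 hvm hv' hcf
  refine ⟨fun x => sh⁻¹ * v' x, fun x hx => ?_, continuousOn_const.mul hv'c,
    fun x hx => mul_ne_zero (inv_ne_zero hsh) (hv'0 x hx).ne'⟩
  have h1 := (hv' x hx).const_mul sh⁻¹
  simpa only [inv_mul_cancel_left₀ hsh] using h1
end
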